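/- Let n ≥ 1, q ∈ [1,∞), and α > 0. Then for every δ > 0 there exists a locally integrable function f on ℝ^n with 0 < ‖f‖_{L^{q,∞}(log L)^{α+1}} < ∞ such that ‖f‖_{𝔏^{q,∞}(log 𝔏)^α} ≤ δ ‖f‖_{L^{q,∞}(log L)^{α+1}}; in other words, the infimum over all such f of the ratio ‖f‖_{𝔏^{q,∞}(log 𝔏)^α} / ‖f‖_{L^{q,∞}(log L)^{α+1}} equals 0. -/

import Mathlib

open MeasureTheory Real Set ENNReal

noncomputable def logFac (s : ℝ) : ℝ := Real.log (Real.exp 1 + 1 / s)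

noncomputable def zygNorm (n : ℕ) (q α : ℝ)
    (f : EuclideanSpace ℝ (Fin n) → ℝ) : ℝ≥0∞ :=
  ⨆ s : Set.Ioi (0 : ℝ),
    (ENNReal.ofReal (logFac s.1) ^ α *
      ⨆ E : {E : Set (EuclideanSpace ℝ (Fin n)) //
          MeasurableSet E ∧ volume E = ENNReal.ofReal s.1},
        ∫⁻ x in E.1, ENNReal.ofReal (|f x| ^ q)) ^ (1 / q)

/-- The non-increasing rearrangement of `f` (with the convention `inf ∅ = ∞`). -/
noncomputable def rearr (n : ℕ) (f : EuclideanSpace ℝ (Fin n) → ℝ) (s : ℝ) : ℝ≥0∞ :=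
  sInf {l : ℝ≥0∞ | volume {x | l < ENNReal.ofReal |f x|} ≤ ENNReal.ofReal s}

/-- The Zygmund norm `‖f‖_{L^q(log L)^α}`. -/
noncomputable def zygmundNorm (n : ℕ) (q α : ℝ)
    (f : EuclideanSpace ℝ (Fin n) → ℝ) : ℝ≥0∞ :=
  (∫⁻ s in Set.Ioi (0 : ℝ),
    ENNReal.ofReal (logFac s) ^ α * rearr n f s ^ q) ^ (1 / q)

/-- The weak Zygmund norm `‖f‖_{L^{q,∞}(log L)^α}`. -/
noncomputable def weakZygNorm (n : ℕ) (q α : ℝ)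
    (f : EuclideanSpace ℝ (Fin n) → ℝ) : ℝ≥0∞ :=
  ⨆ s : Set.Ioi (0 : ℝ),
    (ENNReal.ofReal (logFac s.1) ^ α * ENNReal.ofReal s.1 * rearr n f s.1 ^ q) ^ (1 / q)

/-!
For the indicator of a set of measure `t`, the weak Zygmund norm with exponent `β`, raised to the
power `q`, is comparable to `log (e + 1 / t) ^ β * t`, while the weak Zygmund type norm with
exponent `α`, raised to the power `q`, is at most a constant multiple of
`log (e + 1 / t) ^ α * t`: both suprema are governed by `log (e + 1 / s) ^ b * min s t`, which is
nearly maximal at `s = t` because a power of the logarithm grows more slowly than `1 / s`. For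
`α < β` the ratio of the norms therefore tends to `0` as the set shrinks.
-/

open Filter Topology

section LogFac

variable {s t b : ℝ}

lemma one_le_logFac (hs : 0 < s) : 1 ≤ logFac s := by
  have h : 0 ≤ 1 / s := by positivity
  exact (Real.le_log_iff_exp_le (by positivity)).2 (by linarith)

lemma logFac_pos (hs : 0 < s) : 0 < logFac s :=
  zero_lt_one.trans_le (one_le_logFac hs)

lemma logFac_le_logFac (hs : 0 < s) (hst : s ≤ t) : logFac t ≤ logFac s := by
  have ht : 0 < t := hs.trans_le hst
  unfold logFac
  gcongr

lemma tendsto_logFac_nhdsGT_zero : Tendsto logFac (𝓝[>] 0) atTop := by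
  unfold logFac
  simp only [one_div]
  exact Real.tendsto_log_atTop.comp
    (tendsto_atTop_add_const_left _ (Real.exp 1) tendsto_inv_nhdsGT_zero)

lemma logFac_le_mul_one_add_log_div (hs : 0 < s) (hst : s ≤ t) :
    logFac s ≤ logFac t * (1 + Real.log (t / s)) := by
  have ht : 0 < t := hs.trans_le hst
  have hx : 1 ≤ t / s := (one_le_div hs).2 hst
  have hmul : Real.exp 1 + 1 / s ≤ (Real.exp 1 + 1 / t) * (t / s) := by
    have h : (Real.exp 1 + 1 / t) * (t / s) = Real.exp 1 * (t / s) + 1 / s := by field_simp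
    rw [h]
    gcongr
    exact le_mul_of_one_le_right (Real.exp_pos 1).le hx
  calc logFac s ≤ Real.log ((Real.exp 1 + 1 / t) * (t / s)) :=
        Real.log_le_log (by positivity) hmul
    _ = logFac t + Real.log (t / s) := Real.log_mul (by positivity) (by positivity)
    _ ≤ logFac t * (1 + Real.log (t / s)) := by
        have := le_mul_of_one_le_left (Real.log_nonneg hx) (one_le_logFac ht)
        linarith

lemma one_add_log_rpow_le {x : ℝ} (hx : 1 ≤ x) (hb : 0 ≤ b) :
    (1 + Real.log x) ^ b ≤ (1 + b) ^ b * x := by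
  set u := Real.log x
  have hu : 0 ≤ u := Real.log_nonneg hx
  -- Dividing by `1 + b` rather than `b` avoids treating `b = 0` separately.
  have hlin : 1 + u ≤ (1 + b) * Real.exp (u / (1 + b)) := by
    calc 1 + u ≤ u + (1 + b) := by linarith
      _ = (1 + b) * (u / (1 + b) + 1) := by field_simp
      _ ≤ (1 + b) * Real.exp (u / (1 + b)) := by
          gcongr
          exact Real.add_one_le_exp _
  have hexp : u / (1 + b) * b ≤ u := by
    rw [div_mul_eq_mul_div, div_le_iff₀ (by positivity)]
    nlinarith
  calc (1 + u) ^ b ≤ ((1 + b) * Real.exp (u / (1 + b))) ^ b := by gcongr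
    _ = (1 + b) ^ b * Real.exp (u / (1 + b) * b) := by
        rw [Real.mul_rpow (by positivity) (by positivity), ← Real.exp_mul]
    _ ≤ (1 + b) ^ b * Real.exp u := by gcongr
    _ = (1 + b) ^ b * x := by rw [Real.exp_log (by linarith)]

lemma logFac_rpow_mul_self_le (hs : 0 < s) (hst : s ≤ t) (hb : 0 ≤ b) :
    logFac s ^ b * s ≤ (1 + b) ^ b * (logFac t ^ b * t) := by
  have hx : 1 ≤ t / s := (one_le_div hs).2 hst
  have hLs := logFac_pos hs
  have hLt := logFac_pos (hs.trans_le hst)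
  have hlog : 0 ≤ Real.log (t / s) := Real.log_nonneg hx
  calc logFac s ^ b * s ≤ (logFac t * (1 + Real.log (t / s))) ^ b * s := by
        gcongr
        exact logFac_le_mul_one_add_log_div hs hst
    _ = logFac t ^ b * (1 + Real.log (t / s)) ^ b * s := by
        rw [Real.mul_rpow hLt.le (by positivity)]
    _ ≤ logFac t ^ b * ((1 + b) ^ b * (t / s)) * s := by
        gcongr
        exact one_add_log_rpow_le hx hb
    _ = (1 + b) ^ b * (logFac t ^ b * t) := by field_simp

lemma logFac_rpow_mul_min_le (hs : 0 < s) (ht : 0 < t) (hb : 0 ≤ b) :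
    logFac s ^ b * min s t ≤ (1 + b) ^ b * (logFac t ^ b * t) := by
  rcases le_total s t with hst | hts
  · simpa only [min_eq_left hst] using logFac_rpow_mul_self_le hs hst hb
  · have hLs := logFac_pos hs
    have hLt := logFac_pos ht
    rw [min_eq_right hts]
    calc logFac s ^ b * t ≤ logFac t ^ b * t := by
          gcongr
          exact logFac_le_logFac ht hts
      _ ≤ (1 + b) ^ b * (logFac t ^ b * t) :=
          le_mul_of_one_le_left (by positivity) (Real.one_le_rpow (by linarith) hb)

lemma ofReal_logFac_rpow_mul_le {x : ℝ≥0∞} (hs : 0 < s) (ht : 0 < t) (hb : 0 ≤ b)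
    (hx : x ≤ ENNReal.ofReal (min s t)) :
    ENNReal.ofReal (logFac s) ^ b * x ≤
      ENNReal.ofReal ((1 + b) ^ b * (logFac t ^ b * t)) := by
  have hLs := logFac_pos hs
  calc ENNReal.ofReal (logFac s) ^ b * x
      ≤ ENNReal.ofReal (logFac s) ^ b * ENNReal.ofReal (min s t) := by gcongr
    _ = ENNReal.ofReal (logFac s ^ b * min s t) := by
        rw [ENNReal.ofReal_rpow_of_pos hLs, ENNReal.ofReal_mul (by positivity)]
    _ ≤ ENNReal.ofReal ((1 + b) ^ b * (logFac t ^ b * t)) :=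
        ENNReal.ofReal_le_ofReal (logFac_rpow_mul_min_le hs ht hb)

lemma exists_logFac_rpow_two_mul_le {α β C c : ℝ} (hα : 0 ≤ α) (hαβ : α < β) (hC : 0 ≤ C)
    (hc : 0 < c) :
    ∃ s > 0, C * (logFac (2 * s) ^ α * (2 * s)) ≤ c * (logFac s ^ β * s) := by
  have hlim : Tendsto (fun s ↦ logFac s ^ (β - α)) (𝓝[>] 0) atTop :=
    (tendsto_rpow_atTop (sub_pos.2 hαβ)).comp tendsto_logFac_nhdsGT_zero
  obtain ⟨s, hbig, hs : 0 < s⟩ :=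
    ((hlim.eventually_ge_atTop (2 * C / c)).and eventually_mem_nhdsWithin).exists
  have hLs := logFac_pos hs
  have hL2s := logFac_pos (mul_pos two_pos hs)
  refine ⟨s, hs, ?_⟩
  calc C * (logFac (2 * s) ^ α * (2 * s)) ≤ C * (logFac s ^ α * (2 * s)) := by
        gcongr
        exact logFac_le_logFac hs (by linarith)
    _ = 2 * C * (logFac s ^ α * s) := by ring
    _ ≤ c * logFac s ^ (β - α) * (logFac s ^ α * s) := by
        gcongr ?_ * (logFac s ^ α * s)
        exact (div_le_iff₀' hc).1 hbig
    _ = c * (logFac s ^ β * s) := by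
        rw [← sub_add_cancel β α, Real.rpow_add hLs, sub_add_cancel]
        ring

end LogFac

lemma exists_addHaar_closedBall_eq {E : Type*} [NormedAddCommGroup E] [NormedSpace ℝ E]
    [FiniteDimensional ℝ E] [Nontrivial E] [MeasurableSpace E] [BorelSpace E]
    (μ : Measure E) [μ.IsAddHaarMeasure] (x : E) {c : ℝ≥0∞} (hc : c ≠ ⊤) :
    ∃ r : ℝ, μ (Metric.closedBall x r) = c := by
  set v := μ (Metric.ball (0 : E) 1)
  have hv : v ≠ 0 := (Metric.measure_ball_pos μ 0 one_pos).ne'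
  have hv' : v ≠ ⊤ := measure_ball_lt_top.ne
  refine ⟨(c / v).toReal ^ ((Module.finrank ℝ E : ℝ)⁻¹), ?_⟩
  rw [Measure.addHaar_closedBall μ x (by positivity),
    Real.rpow_inv_natCast_pow (by positivity) Module.finrank_pos.ne',
    ENNReal.ofReal_toReal (ENNReal.div_ne_top hc hv), ENNReal.div_mul_cancel hv hv']

section Indicator

lemma setOf_lt_ofReal_abs_indicator_one {X : Type*} (A : Set X) (l : ℝ≥0∞) :
    {x | l < ENNReal.ofReal |A.indicator (1 : X → ℝ) x|} = if l < 1 then A else ∅ := by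
  ext x
  by_cases hx : x ∈ A <;> by_cases hl : l < 1 <;> simp [hx, hl]

lemma setLIntegral_ofReal_abs_indicator_one_rpow {X : Type*} [MeasurableSpace X]
    {μ : Measure X} {A : Set X} (hA : MeasurableSet A) (E : Set X) {q : ℝ} (hq : q ≠ 0) :
    ∫⁻ x in E, ENNReal.ofReal (|A.indicator (1 : X → ℝ) x| ^ q) ∂μ = μ (A ∩ E) := by
  have h : (fun x ↦ ENNReal.ofReal (|A.indicator (1 : X → ℝ) x| ^ q)) = A.indicator 1 := by
    ext x
    by_cases hx : x ∈ A <;> simp [hx, hq]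
  rw [h, lintegral_indicator_one hA, Measure.restrict_apply hA]

variable {n : ℕ} {A : Set (EuclideanSpace ℝ (Fin n))} {q α s t : ℝ}

lemma rearr_indicator_one (A : Set (EuclideanSpace ℝ (Fin n))) (s : ℝ) :
    rearr n (A.indicator 1) s = if volume A ≤ ENNReal.ofReal s then 0 else 1 := by
  unfold rearr
  simp only [setOf_lt_ofReal_abs_indicator_one]
  split_ifs with h
  · exact le_bot_iff.1 (sInf_le (by simpa using h))
  · have hIci : {l : ℝ≥0∞ | volume (if l < 1 then A else ∅) ≤ ENNReal.ofReal s} = Ici 1 := by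
      ext l
      by_cases hl : l < 1 <;> simp [hl, h, not_lt.1]
    rw [hIci, csInf_Ici]

lemma zygNorm_indicator_one_le (hA : MeasurableSet A) (hAt : volume A = ENNReal.ofReal t)
    (ht : 0 < t) (hq : 0 < q) (hα : 0 ≤ α) :
    zygNorm n q α (A.indicator 1) ≤
      ENNReal.ofReal ((1 + α) ^ α * (logFac t ^ α * t)) ^ (1 / q) := by
  refine iSup_le fun ⟨s, hs⟩ ↦ ENNReal.rpow_le_rpow
    (ofReal_logFac_rpow_mul_le hs ht hα (iSup_le fun ⟨E, _, hE⟩ ↦ ?_)) (by positivity)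
  rw [setLIntegral_ofReal_abs_indicator_one_rpow hA E hq.ne', ENNReal.ofReal_min, ← hE, ← hAt]
  exact le_min (measure_mono inter_subset_right) (measure_mono inter_subset_left)

lemma weakZygNorm_indicator_one_le (hAt : volume A = ENNReal.ofReal t)
    (ht : 0 < t) (hq : 0 < q) (hα : 0 ≤ α) :
    weakZygNorm n q α (A.indicator 1) ≤
      ENNReal.ofReal ((1 + α) ^ α * (logFac t ^ α * t)) ^ (1 / q) := by
  refine iSup_le fun ⟨s, hs⟩ ↦ ENNReal.rpow_le_rpow ?_ (by positivity)
  rw [mul_assoc]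
  refine ofReal_logFac_rpow_mul_le hs ht hα ?_
  rw [rearr_indicator_one, hAt]
  split_ifs with hts
  · simp [hq]
  · rw [ENNReal.one_rpow, mul_one, ENNReal.ofReal_min, min_eq_left (not_le.1 hts).le]

lemma le_weakZygNorm_indicator_one (hs : 0 < s) (hsA : ENNReal.ofReal s < volume A) :
    ENNReal.ofReal (logFac s ^ α * s) ^ (1 / q) ≤ weakZygNorm n q α (A.indicator 1) := by
  have hLs := logFac_pos hs
  refine le_of_eq_of_le ?_ (le_iSup _ (⟨s, hs⟩ : Set.Ioi (0 : ℝ)))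
  rw [rearr_indicator_one, if_neg hsA.not_ge, ENNReal.one_rpow, mul_one,
    ENNReal.ofReal_rpow_of_pos hLs, ENNReal.ofReal_mul (by positivity)]

lemma weakZygNorm_indicator_one_pos (hA : 0 < volume A) :
    0 < weakZygNorm n q α (A.indicator 1) := by
  obtain ⟨s, _, hs, hsA⟩ := ENNReal.lt_iff_exists_real_btwn.1 hA
  replace hs : 0 < s := ENNReal.ofReal_pos.1 hs
  have hLs := logFac_pos hs
  exact (ENNReal.rpow_pos (ENNReal.ofReal_pos.2 (by positivity)) ENNReal.ofReal_ne_top).trans_le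
    (le_weakZygNorm_indicator_one hs hsA)

lemma weakZygNorm_indicator_one_lt_top (hAt : volume A = ENNReal.ofReal t)
    (ht : 0 < t) (hq : 0 < q) (hα : 0 ≤ α) : weakZygNorm n q α (A.indicator 1) < ⊤ :=
  (weakZygNorm_indicator_one_le hAt ht hq hα).trans_lt
    (ENNReal.rpow_lt_top_of_nonneg (by positivity) ENNReal.ofReal_ne_top)

lemma zygNorm_indicator_one_le_mul_weakZygNorm {β δ : ℝ} (hA : MeasurableSet A)
    (hAt : volume A = ENNReal.ofReal t) (hs : 0 < s) (hst : s < t) (hq : 0 < q) (hα : 0 ≤ α)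
    (hδ : 0 < δ) (h : (1 + α) ^ α * (logFac t ^ α * t) ≤ δ ^ q * (logFac s ^ β * s)) :
    zygNorm n q α (A.indicator 1) ≤ ENNReal.ofReal δ * weakZygNorm n q β (A.indicator 1) := by
  have hsA : ENNReal.ofReal s < volume A :=
    hAt ▸ (ENNReal.ofReal_lt_ofReal_iff (hs.trans hst)).2 hst
  calc zygNorm n q α (A.indicator 1)
      ≤ ENNReal.ofReal ((1 + α) ^ α * (logFac t ^ α * t)) ^ (1 / q) :=
        zygNorm_indicator_one_le hA hAt (hs.trans hst) hq hα
    _ ≤ ENNReal.ofReal (δ ^ q * (logFac s ^ β * s)) ^ (1 / q) := by gcongr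
    _ = ENNReal.ofReal δ * ENNReal.ofReal (logFac s ^ β * s) ^ (1 / q) := by
        rw [ENNReal.ofReal_mul (by positivity), ENNReal.mul_rpow_of_nonneg _ _ (by positivity),
          ← ENNReal.ofReal_rpow_of_pos hδ, one_div, ENNReal.rpow_rpow_inv hq.ne']
    _ ≤ ENNReal.ofReal δ * weakZygNorm n q β (A.indicator 1) := by
        gcongr
        exact le_weakZygNorm_indicator_one hs hsA

end Indicator

theorem stmt18_general (n : ℕ) (hn : 1 ≤ n) (q α β : ℝ) (hq : 0 < q) (hα : 0 ≤ α)
    (hαβ : α < β) :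
    ∀ δ > (0 : ℝ), ∃ f : EuclideanSpace ℝ (Fin n) → ℝ,
      LocallyIntegrable f volume ∧
      0 < weakZygNorm n q β f ∧ weakZygNorm n q β f < ⊤ ∧
      zygNorm n q α f ≤ ENNReal.ofReal δ * weakZygNorm n q β f := by
  intro δ hδ
  have : Nonempty (Fin n) := Fin.pos_iff_nonempty.1 hn
  obtain ⟨s, hs, hsmall⟩ := exists_logFac_rpow_two_mul_le hα hαβ
    (Real.rpow_nonneg (add_nonneg zero_le_one hα) α) (Real.rpow_pos_of_pos hδ q)
  obtain ⟨r, hr⟩ := exists_addHaar_closedBall_eq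
    (volume : Measure (EuclideanSpace ℝ (Fin n))) 0 (ENNReal.ofReal_ne_top (r := 2 * s))
  set A : Set (EuclideanSpace ℝ (Fin n)) := Metric.closedBall 0 r
  have hA : MeasurableSet A := Metric.isClosed_closedBall.measurableSet
  have hs2 : 0 < 2 * s := by positivity
  have hA_pos : 0 < volume A := hr ▸ ENNReal.ofReal_pos.2 hs2
  refine ⟨A.indicator 1, ?_, weakZygNorm_indicator_one_pos hA_pos,
    weakZygNorm_indicator_one_lt_top hr hs2 hq (hα.trans hαβ.le),
    zygNorm_indicator_one_le_mul_weakZygNorm hA hr hs (by linarith) hq hα hδ hsmall⟩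
  exact ((integrable_indicator_iff hA).2
    (integrableOn_const measure_closedBall_lt_top.ne)).locallyIntegrable

theorem stmt18 (n : ℕ) (hn : 1 ≤ n) (q α : ℝ) (hq : 1 ≤ q) (hα : 0 < α) :
    ∀ δ > (0 : ℝ), ∃ f : EuclideanSpace ℝ (Fin n) → ℝ,
      LocallyIntegrable f volume ∧
      0 < weakZygNorm n q (α + 1) f ∧ weakZygNorm n q (α + 1) f < ⊤ ∧
      zygNorm n q α f ≤ ENNReal.ofReal δ * weakZygNorm n q (α + 1) f :=
  stmt18_general n hn q α (α + 1) (zero_lt_one.trans_le hq) hα.le (lt_add_one α)
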